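/- Let α ∈ ℝ and u ∈ C_c^∞(ℝ² \ {0}). Define the vector potential a_α(x) = α(-x₂, x₁)/|x|². Then for every R > 0, ∫_{|x|≤R} |((1/i)∇ - a_α) u|² dx ≥ ρ(α) ∫_{|x|≤R} |u|²/|x|² dx, where ρ(α) = min_{n∈ℤ}|n-α|². -/

import Mathlib

open Real MeasureTheory

/-- `ρ(α) = min_{n ∈ ℤ} |n - α|²`. -/
noncomputable def rho (α : ℝ) : ℝ := sInf {d : ℝ | ∃ n : ℤ, d = ((n : ℝ) - α) ^ 2}

lemma rho_le (α : ℝ) (n : ℤ) : rho α ≤ ((n : ℝ) - α) ^ 2 := by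
  refine csInf_le ⟨0, ?_⟩ ⟨n, rfl⟩
  rintro d ⟨m, rfl⟩
  positivity

lemma neg_pi_lt_pi : -π < π := by linarith [Real.pi_pos]

lemma coeff_deriv (g g' : ℝ → ℂ) (hg : ∀ x, HasDerivAt g (g' x) x)
    (hg' : Continuous g') (hper : g π = g (-π)) (n : ℤ) :
    fourierCoeffOn neg_pi_lt_pi g' n = Complex.I * n * fourierCoeffOn neg_pi_lt_pi g n := by
  by_cases hn : n = 0
  · subst hn
    rw [fourierCoeffOn_eq_integral]
    have : ∫ x in (-π)..π, g' x = g π - g (-π) :=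
      intervalIntegral.integral_eq_sub_of_hasDerivAt (fun x _ => hg x)
        (hg'.intervalIntegrable _ _)
    simp [this, hper]
  · have h := fourierCoeffOn_of_hasDerivAt neg_pi_lt_pi hn (fun x _ => hg x)
      (hg'.intervalIntegrable _ _)
    rw [h, hper]
    have hn' : (n : ℂ) ≠ 0 := by exact_mod_cast hn
    have hpi : (π : ℂ) ≠ 0 := by exact_mod_cast Real.pi_ne_zero
    have hI : Complex.I ≠ 0 := Complex.I_ne_zero
    push_cast
    field_simp
    ring

lemma memLp_of_cont (f : ℝ → ℂ) (hf : Continuous f) :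
    MemLp f 2 (volume.restrict (Set.Ioc (-π) π)) := by
  have hb : ∃ C, ∀ x ∈ Set.Icc (-π) π, ‖f x‖ ≤ C :=
    isCompact_Icc.exists_bound_of_continuousOn hf.continuousOn
  obtain ⟨C, hC⟩ := hb
  refine MemLp.of_bound hf.aestronglyMeasurable C ?_
  filter_upwards [ae_restrict_mem measurableSet_Ioc] with x hx
  exact hC x (Set.Ioc_subset_Icc_self hx)

lemma circle_ineq (α : ℝ) (g g' : ℝ → ℂ) (hg : ∀ x, HasDerivAt g (g' x) x)
    (hg' : Continuous g') (hper : g π = g (-π)) :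
    rho α * ∫ x in (-π)..π, ‖g x‖ ^ 2 ≤
      ∫ x in (-π)..π, ‖(Complex.I)⁻¹ * g' x - α * g x‖ ^ 2 := by
  have hgc : Continuous g := continuous_iff_continuousAt.2 fun x => (hg x).continuousAt
  have hhc : Continuous (fun x => (Complex.I)⁻¹ * g' x - α * g x) := by fun_prop
  have h1 := hasSum_sq_fourierCoeffOn neg_pi_lt_pi (memLp_of_cont g hgc)
  have h2 := hasSum_sq_fourierCoeffOn neg_pi_lt_pi (memLp_of_cont _ hhc)
  have key : ∀ n : ℤ, fourierCoeffOn neg_pi_lt_pi (fun x => (Complex.I)⁻¹ * g' x - α * g x) n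
      = ((n : ℂ) - α) * fourierCoeffOn neg_pi_lt_pi g n := by
    intro n
    have e : fourierCoeffOn neg_pi_lt_pi (fun x => (Complex.I)⁻¹ * g' x - α * g x) n
      = fourierCoeffOn neg_pi_lt_pi (fun x => (Complex.I)⁻¹ * g' x) n
        - fourierCoeffOn neg_pi_lt_pi (fun x => (α : ℂ) * g x) n := by
      have hfc : Continuous fun x : ℝ => fourier (-n) (x : AddCircle (π - -π)) :=
        (map_continuous (fourier (-n))).comp (AddCircle.continuous_mk' _)
      rw [fourierCoeffOn_eq_integral, fourierCoeffOn_eq_integral, fourierCoeffOn_eq_integral,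
        ← smul_sub, ← intervalIntegral.integral_sub]
      · simp only [smul_sub]
      · exact (hfc.smul (by fun_prop)).intervalIntegrable _ _
      · exact (hfc.smul (by fun_prop)).intervalIntegrable _ _
    rw [e, fourierCoeffOn.const_mul, fourierCoeffOn.const_mul, coeff_deriv g g' hg hg' hper]
    have hI : Complex.I ≠ 0 := Complex.I_ne_zero
    field_simp
  have h3 := hasSum_le (fun n => ?_) (h1.mul_left (rho α)) h2
  · simp only [smul_eq_mul] at h3
    have hp : 0 < (π - -π)⁻¹ := inv_pos.2 (by linarith [Real.pi_pos])
    rw [mul_left_comm] at h3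
    exact le_of_mul_le_mul_left h3 hp
  · rw [key, norm_mul, mul_pow]
    have : ‖(n : ℂ) - α‖ ^ 2 = ((n : ℝ) - α) ^ 2 := by
      have : (n : ℂ) - α = (((n : ℝ) - α : ℝ) : ℂ) := by push_cast; rfl
      rw [this, Complex.norm_real, Real.norm_eq_abs, sq_abs]
    rw [this]
    exact mul_le_mul_of_nonneg_right (rho_le α n) (by positivity)

lemma cont_of_supp (u : ℝ × ℝ → ℂ) (hsupp : HasCompactSupport u)
    (h0 : tsupport u ⊆ {x : ℝ × ℝ | x ≠ 0}) (f : ℝ × ℝ → ℝ)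
    (hf : ∀ x, x ≠ 0 → ContinuousAt f x) (hz : ∀ x, x ∉ tsupport u → f x = 0) :
    Integrable f := by
  have hc : Continuous f := by
    rw [continuous_iff_continuousAt]
    intro x
    by_cases hx : x = 0
    · have : x ∉ tsupport u := fun h => h0 h hx
      have hev : f =ᶠ[nhds x] fun _ => 0 := by
        filter_upwards [(isClosed_tsupport u).isOpen_compl.mem_nhds this] with y hy
        exact hz y hy
      exact continuousAt_const.congr hev.symm
    · exact hf x hx
  exact hc.integrable_of_hasCompactSupport (HasCompactSupport.intro hsupp hz)

lemma sq_ne (x : ℝ × ℝ) (hx : x ≠ 0) : x.1 ^ 2 + x.2 ^ 2 ≠ 0 := by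
  intro h
  apply hx
  ext
  · have : x.1 ^ 2 = 0 := by nlinarith [sq_nonneg x.1, sq_nonneg x.2]
    simpa using this
  · have : x.2 ^ 2 = 0 := by nlinarith [sq_nonneg x.1, sq_nonneg x.2]
    simpa using this

lemma ptwise (x y s α : ℝ) (a b c : ℂ) (hs : x ^ 2 + y ^ 2 = s) (hs0 : s ≠ 0) :
    ‖(Complex.I)⁻¹ * (x * b - y * a) - α * c‖ ^ 2 / s ≤
      ‖(Complex.I)⁻¹ * a - ((α * (-y) / s : ℝ) : ℂ) * c‖ ^ 2 +
        ‖(Complex.I)⁻¹ * b - ((α * x / s : ℝ) : ℂ) * c‖ ^ 2 := by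
  have hpos : 0 < s := lt_of_le_of_ne (by rw [← hs]; positivity) hs0.symm
  set A := (Complex.I)⁻¹ * a - ((α * (-y) / s : ℝ) : ℂ) * c with hA
  set B := (Complex.I)⁻¹ * b - ((α * x / s : ℝ) : ℂ) * c with hB
  have hsc : (s : ℂ) ≠ 0 := by exact_mod_cast hs0
  have hsc' : (x : ℂ) ^ 2 + (y : ℂ) ^ 2 = s := by exact_mod_cast hs
  have e : (Complex.I)⁻¹ * (x * b - y * a) - α * c = x * B - y * A := by
    rw [hA, hB]
    have : (α : ℂ) * c = α * c * ((x : ℂ) ^ 2 + (y : ℂ) ^ 2) / s := by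
      rw [hsc']; field_simp
    rw [this]
    push_cast
    ring
  rw [e, div_le_iff₀ hpos, ← hs]
  have h1 : ‖(x : ℂ) * B - y * A‖ ≤ |x| * ‖B‖ + |y| * ‖A‖ := by
    refine (norm_sub_le _ _).trans ?_
    simp
  have h2 : ‖(x : ℂ) * B - y * A‖ ^ 2 ≤ (|x| * ‖B‖ + |y| * ‖A‖) ^ 2 :=
    pow_le_pow_left₀ (norm_nonneg _) h1 2
  nlinarith [sq_nonneg (|x| * ‖A‖ - |y| * ‖B‖), sq_abs x, sq_abs y]

lemma polar_nonneg (R : ℝ) (hR : 0 < R) (K : ℝ × ℝ → ℝ)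
    (h : ∀ r, 0 < r → 0 ≤ ∫ θ in (-π)..π, K (r * cos θ, r * sin θ)) :
    0 ≤ ∫ x in {x : ℝ × ℝ | x.1 ^ 2 + x.2 ^ 2 ≤ R ^ 2}, K x := by
  have hm : MeasurableSet {x : ℝ × ℝ | x.1 ^ 2 + x.2 ^ 2 ≤ R ^ 2} :=
    measurableSet_le (by fun_prop) (by fun_prop)
  rw [← integral_indicator hm, ← integral_comp_polarCoord_symm]
  set F : ℝ × ℝ → ℝ := fun p => p.1 • Set.indicator
    {x : ℝ × ℝ | x.1 ^ 2 + x.2 ^ 2 ≤ R ^ 2} K (polarCoord.symm p) with hF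
  change 0 ≤ ∫ p in polarCoord.target, F p
  rw [polarCoord_target]
  by_cases hint : IntegrableOn F (Set.Ioi (0 : ℝ) ×ˢ Set.Ioo (-π) π)
  · rw [Measure.volume_eq_prod] at hint ⊢
    rw [setIntegral_prod _ hint]
    refine setIntegral_nonneg measurableSet_Ioi fun r hr => ?_
    have hr : 0 < r := hr
    have hmem : ∀ θ, ((r * cos θ, r * sin θ) ∈ {x : ℝ × ℝ | x.1 ^ 2 + x.2 ^ 2 ≤ R ^ 2}) ↔
        r ≤ R := by
      intro θ
      have : (r * cos θ) ^ 2 + (r * sin θ) ^ 2 = r ^ 2 := by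
        linear_combination r ^ 2 * Real.cos_sq_add_sin_sq θ
      simp only [Set.mem_ofPred_eq, this]
      exact pow_le_pow_iff_left₀ hr.le hR.le two_ne_zero
    by_cases hrR : r ≤ R
    · have : ∀ θ, F (r, θ) = r * K (r * cos θ, r * sin θ) := by
        intro θ
        simp only [hF, polarCoord_symm_apply, smul_eq_mul]
        rw [Set.indicator_of_mem ((hmem θ).2 hrR)]
      simp only [this]
      rw [integral_const_mul, ← integral_Ioc_eq_integral_Ioo,
        ← intervalIntegral.integral_of_le neg_pi_lt_pi.le]
      exact mul_nonneg hr.le (h r hr)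
    · have : ∀ θ, F (r, θ) = 0 := by
        intro θ
        simp only [hF, polarCoord_symm_apply, smul_eq_mul]
        rw [Set.indicator_of_notMem (fun hh => hrR ((hmem θ).1 hh)), mul_zero]
      simp [this]
  · rw [integral_undef hint]

/-- The Laptev–Weidl Hardy-type inequality for the Aharonov–Bohm vector potential
`a_α(x) = α(-x₂, x₁)/|x|²`: for `u ∈ C_c^∞(ℝ² \ {0})` and every `R > 0`,
`∫_{|x|≤R} |((1/i)∇ - a_α)u|² dx ≥ ρ(α) ∫_{|x|≤R} |u|²/|x|² dx`. -/
theorem laptev_weidl_hardy (α : ℝ) (u : ℝ × ℝ → ℂ)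
    (hu : ContDiff ℝ (⊤ : ℕ∞) u) (hsupp : HasCompactSupport u)
    (h0 : tsupport u ⊆ {x : ℝ × ℝ | x ≠ 0}) (R : ℝ) (hR : 0 < R) :
    rho α * ∫ x in {x : ℝ × ℝ | x.1 ^ 2 + x.2 ^ 2 ≤ R ^ 2},
        ‖u x‖ ^ 2 / (x.1 ^ 2 + x.2 ^ 2) ≤
      ∫ x in {x : ℝ × ℝ | x.1 ^ 2 + x.2 ^ 2 ≤ R ^ 2},
        (‖(Complex.I)⁻¹ * fderiv ℝ u x (1, 0) -
            ((α * (-x.2) / (x.1 ^ 2 + x.2 ^ 2) : ℝ) : ℂ) * u x‖ ^ 2 +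
         ‖(Complex.I)⁻¹ * fderiv ℝ u x (0, 1) -
            ((α * x.1 / (x.1 ^ 2 + x.2 ^ 2) : ℝ) : ℂ) * u x‖ ^ 2) := by
  have hud : Differentiable ℝ u := hu.differentiable (by simp)
  have hfc : Continuous (fderiv ℝ u) := hu.continuous_fderiv (by simp)
  have huc : Continuous u := hu.continuous
  have hfv : ∀ v, Continuous fun x => fderiv ℝ u x v := fun v => hfc.clm_apply continuous_const
  have hc1 := hfv (1, 0)
  have hc2 := hfv (0, 1)
  have hz1 : ∀ x, x ∉ tsupport u → u x = 0 := fun x hx => image_eq_zero_of_notMem_tsupport hx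
  have hz2 : ∀ x, x ∉ tsupport u → fderiv ℝ u x = 0 := fun x hx =>
    fderiv_of_notMem_tsupport ℝ hx
  have hF : Integrable (fun x : ℝ × ℝ => ‖u x‖ ^ 2 / (x.1 ^ 2 + x.2 ^ 2)) := by
    refine cont_of_supp u hsupp h0 _ (fun x hx => ?_) (fun x hx => by simp [hz1 x hx])
    exact ContinuousAt.div (by fun_prop) (by fun_prop) (sq_ne x hx)
  have hH : Integrable (fun x : ℝ × ℝ => ‖(Complex.I)⁻¹ * (x.1 * fderiv ℝ u x (0, 1) -
      x.2 * fderiv ℝ u x (1, 0)) - α * u x‖ ^ 2 / (x.1 ^ 2 + x.2 ^ 2)) := by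
    refine cont_of_supp u hsupp h0 _ (fun x hx => ?_)
      (fun x hx => by simp [hz1 x hx, hz2 x hx])
    exact ContinuousAt.div (by fun_prop) (by fun_prop) (sq_ne x hx)
  have hG : Integrable (fun x : ℝ × ℝ => (‖(Complex.I)⁻¹ * fderiv ℝ u x (1, 0) -
            ((α * (-x.2) / (x.1 ^ 2 + x.2 ^ 2) : ℝ) : ℂ) * u x‖ ^ 2 +
         ‖(Complex.I)⁻¹ * fderiv ℝ u x (0, 1) -
            ((α * x.1 / (x.1 ^ 2 + x.2 ^ 2) : ℝ) : ℂ) * u x‖ ^ 2)) := by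
    refine cont_of_supp u hsupp h0 _ (fun x hx => ?_)
      (fun x hx => by simp [hz1 x hx, hz2 x hx])
    have d1 : ContinuousAt (fun x : ℝ × ℝ => α * (-x.2) / (x.1 ^ 2 + x.2 ^ 2)) x :=
      ContinuousAt.div (by fun_prop) (by fun_prop) (sq_ne x hx)
    have d2 : ContinuousAt (fun x : ℝ × ℝ => α * x.1 / (x.1 ^ 2 + x.2 ^ 2)) x :=
      ContinuousAt.div (by fun_prop) (by fun_prop) (sq_ne x hx)
    have d1' : ContinuousAt
        (fun x : ℝ × ℝ => ((α * (-x.2) / (x.1 ^ 2 + x.2 ^ 2) : ℝ) : ℂ)) x :=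
      Complex.continuous_ofReal.continuousAt.comp d1
    have d2' : ContinuousAt (fun x : ℝ × ℝ => ((α * x.1 / (x.1 ^ 2 + x.2 ^ 2) : ℝ) : ℂ)) x :=
      Complex.continuous_ofReal.continuousAt.comp d2
    exact (((hc1.continuousAt.const_mul _).sub (d1'.mul huc.continuousAt)).norm.pow 2).add
      (((hc2.continuousAt.const_mul _).sub (d2'.mul huc.continuousAt)).norm.pow 2)
  have hne : ∀ᵐ x ∂(volume.restrict {x : ℝ × ℝ | x.1 ^ 2 + x.2 ^ 2 ≤ R ^ 2}),
      x ≠ (0 : ℝ × ℝ) := ae_restrict_of_ae (Measure.ae_ne volume (0 : ℝ × ℝ))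
  have hHG := integral_mono_ae hH.integrableOn.integrable hG.integrableOn.integrable
    (μ := volume.restrict {x : ℝ × ℝ | x.1 ^ 2 + x.2 ^ 2 ≤ R ^ 2}) (by
      filter_upwards [hne] with x hx
      exact ptwise x.1 x.2 _ α _ _ _ rfl (sq_ne x hx))
  refine le_trans ?_ hHG
  rw [← integral_const_mul, ← sub_nonneg, ← integral_sub hH.integrableOn.integrable
    (hF.const_mul _).integrableOn.integrable]
  refine polar_nonneg R hR _ fun r hr => ?_
  set g : ℝ → ℂ := fun θ => u (r * cos θ, r * sin θ) with hgdef
  set g' : ℝ → ℂ := fun θ => ((r * cos θ : ℝ) : ℂ) * fderiv ℝ u (r * cos θ, r * sin θ) (0, 1) -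
    ((r * sin θ : ℝ) : ℂ) * fderiv ℝ u (r * cos θ, r * sin θ) (1, 0) with hg'def
  have hg : ∀ θ, HasDerivAt g (g' θ) θ := by
    intro θ
    have hp : HasDerivAt (fun θ : ℝ => (r * cos θ, r * sin θ)) (r * (-sin θ), r * cos θ) θ :=
      ((hasDerivAt_cos θ).const_mul r).prodMk ((hasDerivAt_sin θ).const_mul r)
    have := (hud (r * cos θ, r * sin θ)).hasFDerivAt.comp_hasDerivAt θ hp
    have e : ((r * (-sin θ), r * cos θ) : ℝ × ℝ) =
      (r * cos θ) • ((0, 1) : ℝ × ℝ) - (r * sin θ) • ((1, 0) : ℝ × ℝ) := by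
      ext <;> simp
    rw [e, map_sub, map_smul, map_smul, Complex.real_smul, Complex.real_smul] at this
    exact this
  have hpc : Continuous (fun θ : ℝ => (r * cos θ, r * sin θ)) := by fun_prop
  have hg'c : Continuous g' :=
    ((Complex.continuous_ofReal.comp (by fun_prop)).mul (hc2.comp hpc)).sub
      ((Complex.continuous_ofReal.comp (by fun_prop)).mul (hc1.comp hpc))
  have hgc : Continuous g := huc.comp hpc
  have hcirc := circle_ineq α g g' hg hg'c (by simp [hgdef])
  have hr2 : ∀ θ, (r * cos θ) ^ 2 + (r * sin θ) ^ 2 = r ^ 2 := fun θ => by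
    linear_combination r ^ 2 * Real.cos_sq_add_sin_sq θ
  have hEq : (∫ θ in (-π)..π, (‖(Complex.I)⁻¹ * g' θ - α * g θ‖ ^ 2 - rho α * ‖g θ‖ ^ 2) / r ^ 2)
      = ((∫ θ in (-π)..π, ‖(Complex.I)⁻¹ * g' θ - α * g θ‖ ^ 2) -
        rho α * ∫ θ in (-π)..π, ‖g θ‖ ^ 2) / r ^ 2 := by
    rw [intervalIntegral.integral_div, intervalIntegral.integral_sub,
      intervalIntegral.integral_const_mul]
    · exact Continuous.intervalIntegrable (by fun_prop) _ _
    · exact Continuous.intervalIntegrable (by fun_prop) _ _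
  have hfin : 0 ≤ ∫ θ in (-π)..π,
      (‖(Complex.I)⁻¹ * g' θ - α * g θ‖ ^ 2 - rho α * ‖g θ‖ ^ 2) / r ^ 2 := by
    rw [hEq]
    exact div_nonneg (sub_nonneg.2 hcirc) (by positivity)
  refine hfin.trans_eq (intervalIntegral.integral_congr fun θ _ => ?_)
  simp only [hr2, hgdef, hg'def]
  ring
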